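/- Let $f(x)=\min_{\alpha\in A}(c_\alpha+\alpha\cdot x)$ be a linear tropical polynomial in $n$ variables, that is, $A\subset\mathbb{N}^n$ is finite and nonempty, $c_\alpha\in\mathbb{R}$, and $\sum_j\alpha_j\le 1$ for every $\alpha\in A$. Let $T(f)\subseteq\mathbb{R}^n$ be the set of points at which this minimum is attained by at least two distinct exponents $\alpha\in A$. Let $x,y\in T(f)$ and $\lambda,\mu\in\mathbb{R}$, and define $z\in\mathbb{R}^n$ by $z_j=\min(\lambda+x_j,\mu+y_j)$. Then: 1. The point with coordinates $z_j-\min(\lambda,\mu)$, $1\le j\le n$, belongs to $T(f)$. 2. If $\min(\lambda,\mu)=0$, or if $f$ is homogeneous (that is, $\sum_j\alpha_j=1$ for every $\alpha\in A$), then $z$ itself belongs to $T(f)$. (In other words, every tropical hyperplane is tropically convex: if $x\in\mathbb{R}^n$ is identified with the class of $(0,x)$ in $\mathbb{R}^{n+1}/\mathbb{R}(1,\dots,1)$, then the tropical linear combination of $(0,x)$ and $(0,y)$ with coefficients $\lambda,\mu$ is $(\min(\lambda,\mu),z)$, which represents the point of part 1.) -/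

import Mathlib

/-- The affine-linear function `x ↦ c + α · x` represented by the tropical monomial with
coefficient `c` and exponent vector `α`. -/
def tropTerm {n : ℕ} (c : ℝ) (α : Fin n → ℕ) (x : Fin n → ℝ) : ℝ :=
  c + ∑ j, (α j : ℝ) * x j

/-- The tropical hypersurface of the tropical polynomial with support `A` and coefficients
`c α`, `α ∈ A`: the set of points at which the minimum of the terms is attained by at least
two distinct exponents. -/
def tropHyp {n : ℕ} (A : Finset (Fin n → ℕ)) (c : (Fin n → ℕ) → ℝ) :
    Set (Fin n → ℝ) :=
  {x | ∃ α ∈ A, ∃ β ∈ A, α ≠ β ∧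
    tropTerm (c α) α x = tropTerm (c β) β x ∧
    ∀ γ ∈ A, tropTerm (c α) α x ≤ tropTerm (c γ) γ x}

/-- The tropical linear combination `(l ⊙ x) ⊕ (m ⊙ y)`, computed coordinatewise. -/
noncomputable def tropComb {n : ℕ} (l m : ℝ) (x y : Fin n → ℝ) : Fin n → ℝ :=
  fun j => min (l + x j) (m + y j)

/-- An exponent vector of total degree at most one is zero or a standard basis vector. -/
theorem exponent_eq_zero_or_single {n : ℕ} {α : Fin n → ℕ} (h : ∑ j, α j ≤ 1) :
    α = 0 ∨ ∃ i, α = Pi.single i 1 := by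
  by_cases h0 : α = 0
  · exact Or.inl h0
  · obtain ⟨i, hi⟩ := Function.ne_iff.mp h0
    refine Or.inr ⟨i, funext fun j => ?_⟩
    have hsum := Finset.add_sum_erase Finset.univ α (Finset.mem_univ i)
    simp only [Pi.zero_apply] at hi
    by_cases hj : j = i
    · subst hj
      rw [Pi.single_eq_same]
      omega
    · have hle : α j ≤ ∑ k ∈ Finset.univ.erase i, α k :=
        Finset.single_le_sum (f := α) (fun _ _ => Nat.zero_le _)
          (Finset.mem_erase.mpr ⟨hj, Finset.mem_univ j⟩)
      rw [Pi.single_eq_of_ne hj]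
      omega

theorem tropTerm_zero {n : ℕ} (c : ℝ) (x : Fin n → ℝ) : tropTerm c 0 x = c := by
  simp [tropTerm]

theorem tropTerm_single {n : ℕ} (c : ℝ) (i : Fin n) (x : Fin n → ℝ) :
    tropTerm c (Pi.single i 1) x = c + x i := by
  simp [tropTerm, Pi.single_apply]

/-- If, up to a common additive constant, every term at `w` is the tropical combination of the
terms at two points of the hypersurface, then `w` lies on the hypersurface. -/
theorem mem_tropHyp_of_tropTerm_eq_min {n : ℕ} {A : Finset (Fin n → ℕ)}
    {c : (Fin n → ℕ) → ℝ} {x y w : Fin n → ℝ} {l m s : ℝ}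
    (hx : x ∈ tropHyp A c) (hy : y ∈ tropHyp A c)
    (hw : ∀ α ∈ A, tropTerm (c α) α w + s =
      min (l + tropTerm (c α) α x) (m + tropTerm (c α) α y)) :
    w ∈ tropHyp A c := by
  obtain ⟨α, hα, β, hβ, hne, heq, hmin⟩ := hx
  obtain ⟨α', hα', β', hβ', hne', heq', hmin'⟩ := hy
  rcases le_total (l + tropTerm (c α) α x) (m + tropTerm (c α') α' y) with h | h
  · have key : ∀ γ ∈ A, l + tropTerm (c α) α x ≤ tropTerm (c γ) γ w + s := fun γ hγ => by
      rw [hw γ hγ]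
      exact le_min (by linarith [hmin γ hγ]) (by linarith [hmin' γ hγ])
    have h₁ := (hw α hα).le.trans (min_le_left _ _)
    have h₂ := (hw β hβ).le.trans (min_le_left _ _)
    exact ⟨α, hα, β, hβ, hne, by linarith [key α hα, key β hβ],
      fun γ hγ => by linarith [key γ hγ]⟩
  · have key : ∀ γ ∈ A, m + tropTerm (c α') α' y ≤ tropTerm (c γ) γ w + s := fun γ hγ => by
      rw [hw γ hγ]
      exact le_min (by linarith [hmin γ hγ]) (by linarith [hmin' γ hγ])
    have h₁ := (hw α' hα').le.trans (min_le_right _ _)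
    have h₂ := (hw β' hβ').le.trans (min_le_right _ _)
    exact ⟨α', hα', β', hβ', hne', by linarith [key α' hα', key β' hβ'],
      fun γ hγ => by linarith [key γ hγ]⟩

/-- A term of degree one commutes with tropical combinations. -/
theorem tropTerm_single_tropComb {n : ℕ} (c l m : ℝ) (i : Fin n) (x y : Fin n → ℝ) :
    tropTerm c (Pi.single i 1) (tropComb l m x y) =
      min (l + tropTerm c (Pi.single i 1) x) (m + tropTerm c (Pi.single i 1) y) := by
  simp only [tropTerm_single, tropComb, ← min_add_add_left, add_left_comm]

/-- A term of degree at most one commutes with tropical combinations in homogeneous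
coordinates. -/
theorem tropTerm_tropComb_sub_min {n : ℕ} {α : Fin n → ℕ} (hα : ∑ j, α j ≤ 1) (c l m : ℝ)
    (x y : Fin n → ℝ) :
    tropTerm c α (fun j => tropComb l m x y j - min l m) + min l m =
      min (l + tropTerm c α x) (m + tropTerm c α y) := by
  rcases exponent_eq_zero_or_single hα with rfl | ⟨i, rfl⟩
  · rw [tropTerm_zero, tropTerm_zero, tropTerm_zero, min_add_add_right, add_comm]
  · rw [← tropTerm_single_tropComb, tropTerm_single, tropTerm_single]
    ring

/-- Tropical hyperplanes are tropically convex. A point `x` of `ℝ^n` has homogeneous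
coordinates `(0, x)`; the tropical combination of `(0, x)` and `(0, y)` is
`(min l m, tropComb l m x y)`, which represents the point `tropComb l m x y - min l m`.
If the coordinate with index zero is already normalized, or does not occur in the
polynomial, then `tropComb l m x y` itself lies on the hyperplane. -/
theorem tropical_hyperplane_tropically_convex (n : ℕ)
    (A : Finset (Fin n → ℕ)) (c : (Fin n → ℕ) → ℝ)
    (hA : A.Nonempty) (hlin : ∀ α ∈ A, (∑ j, α j) ≤ 1)
    (x y : Fin n → ℝ) (hx : x ∈ tropHyp A c) (hy : y ∈ tropHyp A c)
    (l m : ℝ) :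
    (fun j => tropComb l m x y j - min l m) ∈ tropHyp A c ∧
      (min l m = 0 ∨ (∀ α ∈ A, (∑ j, α j) = 1) → tropComb l m x y ∈ tropHyp A c) := by
  have hcomb : (fun j => tropComb l m x y j - min l m) ∈ tropHyp A c :=
    mem_tropHyp_of_tropTerm_eq_min hx hy fun α hα =>
      tropTerm_tropComb_sub_min (hlin α hα) (c α) l m x y
  refine ⟨hcomb, ?_⟩
  rintro (h | h)
  · simpa only [h, sub_zero] using hcomb
  · refine mem_tropHyp_of_tropTerm_eq_min (l := l) (m := m) (s := 0) hx hy fun α hα => ?_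
    rcases exponent_eq_zero_or_single (hlin α hα) with rfl | ⟨i, rfl⟩
    · simpa using h 0 hα
    · rw [add_zero, tropTerm_single_tropComb]
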